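/- arXiv:2203.13163 — 4 statements merged into one kernel-verified Lean document; each statement's English description precedes it below -/
import Mathlib

section
/- Let H be a complex Hilbert space and let R be a map assigning to every z ∈ ℂ with Im z ≠ 0 a bounded linear operator R(z) on H such that: (i) R(z) is injective for every nonreal z; (ii) R(z)* = R(z̄) for every nonreal z; (iii) the Hilbert identity R(z₁) − R(z₂) = (z₁ − z₂)·R(z₁)R(z₂) holds for all nonreal z₁, z₂. Then there exists a densely defined self-adjoint operator A in H whose resolvent is R, i.e. for every nonreal z the operator R(z) maps H bijectively onto the domain of A, A(R(z)h) − z·R(z)h = h for every h ∈ H, and R(z)(Ax − z·x) = x for every x in the domain of A. -/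
open MeasureTheory Complex

/-- If `R` assigns to every nonreal `z : ℂ` a bounded operator on a complex
Hilbert space `H` such that each `R z` is injective, `(R z)* = R z̄`, and the Hilbert
(first resolvent) identity `R z₁ - R z₂ = (z₁ - z₂) • (R z₁ ∘ R z₂)` holds, then `R` is the
resolvent of a densely defined self-adjoint operator `A` in `H`: for every nonreal `z`,
`R z` maps `H` bijectively onto the domain of `A` (injectivity being hypothesis (i), the
surjectivity onto the domain is `Set.range (R z) = A.domain`), `A (R z h) - z • R z h = h`
for all `h`, and `R z (A x - z • x) = x` for all `x` in the domain of `A`. -/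
theorem stmt0 {H : Type*} [NormedAddCommGroup H] [InnerProductSpace ℂ H] [CompleteSpace H]
    (R : ℂ → H →L[ℂ] H)
    (hinj : ∀ z : ℂ, z.im ≠ 0 → Function.Injective (R z))
    (hadj : ∀ z : ℂ, z.im ≠ 0 → ContinuousLinearMap.adjoint (R z) = R (starRingEnd ℂ z))
    (hres : ∀ z₁ z₂ : ℂ, z₁.im ≠ 0 → z₂.im ≠ 0 →
      R z₁ - R z₂ = (z₁ - z₂) • ((R z₁).comp (R z₂))) :
    ∃ A : H →ₗ.[ℂ] H, Dense (A.domain : Set H) ∧ A.adjoint = A ∧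
      ∀ z : ℂ, z.im ≠ 0 →
        Set.range (R z) = (A.domain : Set H) ∧
        (∀ (h : H) (hm : R z h ∈ A.domain), A ⟨R z h, hm⟩ - z • R z h = h) ∧
        (∀ x : A.domain, R z (A x - z • (x : H)) = (x : H)) := by
  have hI : (I : ℂ).im ≠ 0 := by simp
  have hI' : (-I : ℂ).im ≠ 0 := by simp
  have hadjI : ContinuousLinearMap.adjoint (R I) = R (-I) := by
    rw [hadj I hI, conj_I]
  have hr : ∀ z w : ℂ, z.im ≠ 0 → w.im ≠ 0 → ∀ h, R z h = R w (h + (z - w) • R z h) := by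
    intro z w hz hw h
    have h1 := congrArg (fun T : H →L[ℂ] H => T h) (hres w z hw hz)
    simp only [ContinuousLinearMap.sub_apply, ContinuousLinearMap.smul_apply,
      ContinuousLinearMap.comp_apply] at h1
    rw [map_add, map_smul, ← neg_sub w z, neg_smul, ← h1]
    abel
  let e := LinearEquiv.ofInjective (R I : H →ₗ[ℂ] H) (hinj I hI)
  let A : H →ₗ.[ℂ] H :=
    { domain := LinearMap.range (R I : H →ₗ[ℂ] H)
      toFun := (e.symm : _ →ₗ[ℂ] H) + I • (LinearMap.range (R I : H →ₗ[ℂ] H)).subtype }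
  have hA : ∀ (k : H) (hm : R I k ∈ A.domain), A ⟨R I k, hm⟩ = k + I • R I k := by
    intro k hm
    have : e.symm ⟨R I k, hm⟩ = k := by
      rw [LinearEquiv.symm_apply_eq]
      rfl
    change e.symm ⟨R I k, hm⟩ + I • R I k = _
    rw [this]
  have hmem : ∀ z : ℂ, z.im ≠ 0 → ∀ h, R z h ∈ A.domain := fun z hz h =>
    ⟨h + (z - I) • R z h, (hr z I hz hI h).symm⟩
  have h2 : ∀ z : ℂ, z.im ≠ 0 → ∀ (h : H) (hm : R z h ∈ A.domain),
      A ⟨R z h, hm⟩ - z • R z h = h := by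
    intro z hz h hm
    have h3 := hr z I hz hI h
    have h4 := hA (h + (z - I) • R z h) (hmem I hI _)
    have h5 : (⟨R z h, hm⟩ : A.domain) = ⟨R I (h + (z - I) • R z h), hmem I hI _⟩ :=
      Subtype.ext h3
    rw [h5, h4, ← h3]
    module
  have h3 : ∀ z : ℂ, z.im ≠ 0 → ∀ x : A.domain, R z (A x - z • (x : H)) = (x : H) := by
    rintro z hz ⟨_, k, rfl⟩
    have h4 := hA k (hmem I hI k)
    have h5 := hr I z hI hz k
    change R z (A ⟨R I k, hmem I hI k⟩ - z • R I k) = R I k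
    rw [h4]
    refine Eq.trans ?_ h5.symm
    congr 1
    module
  have hsw : ∀ a b : H, inner ℂ (R I a) b = inner ℂ a (R (-I) b) := by
    intro a b
    rw [← hadjI, ContinuousLinearMap.adjoint_inner_right]
  have hd : Dense (A.domain : Set H) := by
    rw [Submodule.dense_iff_topologicalClosure_eq_top,
      Submodule.topologicalClosure_eq_top_iff, Submodule.eq_bot_iff]
    intro v hv
    apply hinj (-I) hI'
    rw [map_zero]
    refine ext_inner_left ℂ fun a => ?_
    rw [← hsw, inner_zero_right]
    exact (Submodule.mem_orthogonal _ _).1 hv _ (hmem I hI a)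
  have hsym : A.IsFormalAdjoint A := by
    intro x y
    have hx := h3 I hI x
    have hy := h3 (-I) hI' y
    have key := hsw (A x - I • (x : H)) (A y - (-I) • (y : H))
    rw [hx, hy] at key
    simp only [inner_sub_left, inner_sub_right, inner_smul_left, inner_smul_right, conj_I] at key
    linear_combination -key
  have hle : A ≤ A.adjoint := hsym.le_adjoint hd
  refine ⟨A, hd, ?_, fun z hz => ⟨?_, h2 z hz, h3 z hz⟩⟩
  · symm
    refine LinearPMap.eq_of_le_of_domain_eq hle (le_antisymm hle.1 ?_)
    intro y hy
    have hf := LinearPMap.adjoint_isFormalAdjoint hd ⟨y, hy⟩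
    set w := A.adjoint ⟨y, hy⟩ with hw
    have : y = R (-I) (w + I • y) := by
      refine ext_inner_right ℂ fun k => ?_
      have h4 := hf ⟨R I k, hmem I hI k⟩
      rw [hA] at h4
      have h5 : inner ℂ (R (-I) (w + I • y)) k = inner ℂ (w + I • y) (R I k) := by
        rw [← inner_conj_symm, ← hsw, inner_conj_symm]
      rw [h5]
      simp only [inner_add_left, inner_add_right, inner_smul_left, inner_smul_right, conj_I] at h4 ⊢
      linear_combination -h4
    rw [this]
    exact hmem _ hI' _
  · ext x
    constructor
    · rintro ⟨h, rfl⟩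
      exact hmem z hz h
    · intro hx
      exact ⟨_, h3 z hz ⟨x, hx⟩⟩
end

section
/- Let H and K be complex Hilbert spaces, A a densely defined self-adjoint operator in H, and R(z), Im z ≠ 0, its resolvent. Let G assign to each nonreal z a bounded linear operator G(z) : K → H such that: (a) G(z) = G(z₀) + (z − z₀)R(z)G(z₀) for all nonreal z, z₀; (b) G(z) is injective for every nonreal z; (c) for every nonreal z₀ the intersection of the domain of A with the closure of the range of G(z₀) is {0}. Let Q assign to each nonreal z a bounded linear operator Q(z) on K such that Q(z)* = Q(z̄) for every nonreal z and Q(z) − Q(z₀) = (z − z₀)·G(z̄₀)*G(z) for all nonreal z, z₀. Let L be a densely defined self-adjoint operator in K such that for every nonreal z the operator Q(z) + L is boundedly invertible, meaning there is a bounded operator Γ(z) on K whose range is contained in the domain of L with (Q(z) + L)(Γ(z)k) = k for all k ∈ K and Γ(z)(Q(z)u + Lu) = u for all u in the domain of L. Then the operator function R_L(z) = R(z) − G(z)Γ(z)G(z̄)*, Im z ≠ 0, is the resolvent of a densely defined self-adjoint operator A₁ in H which is a singular perturbation of A: the intersection of the domains of A and A₁ is dense in H and A₁x = Ax for every x in that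 intersection. -/
open MeasureTheory Complex ContinuousLinearMap

theorem pseudoRes_aux {H : Type*} [NormedAddCommGroup H] [InnerProductSpace ℂ H] [CompleteSpace H]
    (S : ℂ → H →L[ℂ] H)
    (hinj : ∀ z : ℂ, z.im ≠ 0 → Function.Injective (S z))
    (hadj : ∀ z : ℂ, z.im ≠ 0 → ∀ h k : H,
      inner ℂ (S z h) k = inner ℂ h (S (starRingEnd ℂ z) k))
    (hres : ∀ z w : ℂ, z.im ≠ 0 → w.im ≠ 0 → ∀ h : H,
      S z h = S w (h + (z - w) • S z h)) :
    ∃ A₁ : H →ₗ.[ℂ] H, Dense (A₁.domain : Set H) ∧ A₁.adjoint = A₁ ∧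
      (∀ z : ℂ, z.im ≠ 0 →
        Set.range (S z) = (A₁.domain : Set H) ∧
        (∀ (h : H) (hm : S z h ∈ A₁.domain), A₁ ⟨S z h, hm⟩ - z • S z h = h)) := by
  have hI : (I : ℂ).im ≠ 0 := by simp
  have hnI : (-I : ℂ).im ≠ 0 := by simp
  let e := LinearEquiv.ofInjective (S I).toLinearMap (hinj I hI)
  let A₁ : H →ₗ.[ℂ] H :=
    { domain := LinearMap.range (S I).toLinearMap
      toFun := e.symm.toLinearMap + I • (LinearMap.range (S I).toLinearMap).subtype }
  have hAI : ∀ (h : H) (hm : S I h ∈ A₁.domain), A₁ ⟨S I h, hm⟩ = h + I • S I h := by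
    intro h hm
    have : e.symm ⟨S I h, hm⟩ = h := by
      rw [LinearEquiv.symm_apply_eq]
      rfl
    change e.symm ⟨S I h, hm⟩ + I • S I h = _
    rw [this]
  have hmemI : ∀ h, S I h ∈ A₁.domain := fun h => ⟨h, rfl⟩
  have hmem : ∀ z : ℂ, z.im ≠ 0 → ∀ h, S z h ∈ A₁.domain := by
    intro z hz h
    rw [hres z I hz hI h]
    exact hmemI _
  have hAz : ∀ z : ℂ, z.im ≠ 0 → ∀ (h : H) (hm : S z h ∈ A₁.domain),
      A₁ ⟨S z h, hm⟩ = h + z • S z h := by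
    intro z hz h hm
    have h1 := hres z I hz hI h
    have h2 : (⟨S z h, hm⟩ : A₁.domain) = ⟨S I (h + (z - I) • S z h), hmemI _⟩ :=
      Subtype.ext h1
    rw [h2, hAI, ← h1]
    module
  have hran : ∀ z : ℂ, z.im ≠ 0 → Set.range (S z) = (A₁.domain : Set H) := by
    intro z hz
    apply Set.Subset.antisymm
    · rintro _ ⟨h, rfl⟩
      exact hmem z hz h
    · rintro _ ⟨h, rfl⟩
      exact ⟨_, (hres I z hI hz h).symm⟩
  have hdense : Dense (A₁.domain : Set H) := by
    rw [Submodule.dense_iff_topologicalClosure_eq_top, Submodule.topologicalClosure_eq_top_iff,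
      Submodule.eq_bot_iff]
    intro y hy
    have h0 : S (starRingEnd ℂ I) y = 0 := by
      apply ext_inner_left ℂ
      intro v
      rw [← hadj I hI, inner_zero_right]
      exact (Submodule.mem_orthogonal _ _).1 hy _ (hmemI v)
    exact hinj (starRingEnd ℂ I) (by simp) (by rw [h0, map_zero])
  have hadj' : ∀ h k, inner ℂ (S I h) k = inner ℂ h (S (-I) k) := by
    intro h k
    have := hadj I hI h k
    rwa [conj_I] at this
  have hadj'' : ∀ h k, inner ℂ (S (-I) h) k = inner ℂ h (S I k) := by
    intro h k
    have := hadj (-I) hnI h k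
    rwa [map_neg, conj_I, neg_neg] at this
  have hform : A₁.IsFormalAdjoint A₁ := by
    rintro ⟨x, hx⟩ ⟨y, hy⟩
    obtain ⟨h, rfl⟩ : x ∈ Set.range (S I) := by rw [hran I hI]; exact hx
    obtain ⟨k, rfl⟩ : y ∈ Set.range (S (-I)) := by rw [hran (-I) hnI]; exact hy
    rw [hAz I hI, hAz (-I) hnI]
    simp only [inner_add_left, inner_add_right, inner_smul_left, inner_smul_right, conj_I]
    rw [hadj' h k]
  refine ⟨A₁, hdense, ?_, fun z hz => ⟨hran z hz, fun h hm => ?_⟩⟩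
  · refine le_antisymm ?_ (hform.le_adjoint hdense)
    have key : ∀ y : A₁.adjoint.domain, (y : H) ∈ A₁.domain := by
      intro y
      have : (y : H) = S (-I) (A₁.adjoint y + I • (y : H)) := by
        apply ext_inner_right ℂ
        intro v
        have h1 := A₁.adjoint_isFormalAdjoint hdense y ⟨S I v, hmemI v⟩
        rw [hAI] at h1
        simp only [inner_add_right, inner_smul_right] at h1
        rw [hadj'', inner_add_left, inner_smul_left, conj_I, h1]
        ring
      rw [this]
      exact hmem _ hnI _
    refine ⟨fun y hy => key ⟨y, hy⟩, ?_⟩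
    rintro y x hxy
    apply A₁.adjoint_apply_eq hdense
    intro v
    rw [hxy]
    exact hform x v
  · rw [hAz z hz]
    abel

/-- Theorem 1.1 of the paper, Krein's formula. Let `A` be a densely defined
self-adjoint operator in a complex Hilbert space `H` with resolvent `R z` (for nonreal `z`),
and let `G`, `Q`, `L`, `Γ` be as in the hypotheses: `G z = G z₀ + (z - z₀) • R z ∘ G z₀`,
each `G z` injective, the domain of `A` meets the closure of the range of `G z₀` only in `0`;
`(Q z)* = Q z̄` and `Q z - Q z₀ = (z - z₀) • (G z̄₀)* ∘ G z`; `L` is a densely defined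
self-adjoint operator in `K` and `Γ z` is a two-sided bounded inverse of `Q z + L`.
Then `R_L z = R z - G z ∘ Γ z ∘ (G z̄)*` is the resolvent of a densely defined self-adjoint
operator `A₁` in `H` which is a singular perturbation of `A`: the intersection of the domains
is dense and `A₁ = A` there. -/
theorem stmt1 {H K : Type*} [NormedAddCommGroup H] [InnerProductSpace ℂ H] [CompleteSpace H]
    [NormedAddCommGroup K] [InnerProductSpace ℂ K] [CompleteSpace K]
    (A : H →ₗ.[ℂ] H) (hAdense : Dense (A.domain : Set H)) (hAsa : A.adjoint = A)
    (R : ℂ → H →L[ℂ] H)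
    (hR : ∀ z : ℂ, z.im ≠ 0 →
      Function.Injective (R z) ∧ Set.range (R z) = (A.domain : Set H) ∧
      (∀ (h : H) (hm : R z h ∈ A.domain), A ⟨R z h, hm⟩ - z • R z h = h))
    (G : ℂ → K →L[ℂ] H)
    (hG1 : ∀ z z₀ : ℂ, z.im ≠ 0 → z₀.im ≠ 0 →
      G z = G z₀ + (z - z₀) • ((R z).comp (G z₀)))
    (hG2 : ∀ z : ℂ, z.im ≠ 0 → Function.Injective (G z))
    (hG3 : ∀ z₀ : ℂ, z₀.im ≠ 0 →
      (A.domain : Set H) ∩ closure (Set.range (G z₀)) = {0})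
    (Q : ℂ → K →L[ℂ] K)
    (hQ1 : ∀ z : ℂ, z.im ≠ 0 → adjoint (Q z) = Q (starRingEnd ℂ z))
    (hQ2 : ∀ z z₀ : ℂ, z.im ≠ 0 → z₀.im ≠ 0 →
      Q z - Q z₀ = (z - z₀) • ((adjoint (G (starRingEnd ℂ z₀))).comp (G z)))
    (L : K →ₗ.[ℂ] K) (hLdense : Dense (L.domain : Set K)) (hLsa : L.adjoint = L)
    (Γ : ℂ → K →L[ℂ] K)
    (hΓ : ∀ z : ℂ, z.im ≠ 0 →
      (∀ k : K, Γ z k ∈ L.domain) ∧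
      (∀ (k : K) (hm : Γ z k ∈ L.domain), Q z (Γ z k) + L ⟨Γ z k, hm⟩ = k) ∧
      (∀ u : L.domain, Γ z (Q z (u : K) + L u) = (u : K))) :
    ∃ A₁ : H →ₗ.[ℂ] H, Dense (A₁.domain : Set H) ∧ A₁.adjoint = A₁ ∧
      (∀ z : ℂ, z.im ≠ 0 →
        Function.Injective
          (R z - (G z).comp ((Γ z).comp (adjoint (G (starRingEnd ℂ z))))) ∧
        Set.range (R z - (G z).comp ((Γ z).comp (adjoint (G (starRingEnd ℂ z)))))
          = (A₁.domain : Set H) ∧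
        (∀ (h : H)
          (hm : (R z - (G z).comp ((Γ z).comp (adjoint (G (starRingEnd ℂ z))))) h ∈ A₁.domain),
          A₁ ⟨(R z - (G z).comp ((Γ z).comp (adjoint (G (starRingEnd ℂ z))))) h, hm⟩
            - z • (R z - (G z).comp ((Γ z).comp (adjoint (G (starRingEnd ℂ z))))) h = h)) ∧
      Dense ((A.domain : Set H) ∩ (A₁.domain : Set H)) ∧
      (∀ (x : H) (h1 : x ∈ A.domain) (h2 : x ∈ A₁.domain), A₁ ⟨x, h2⟩ = A ⟨x, h1⟩) := by
  have hc : ∀ z : ℂ, z.im ≠ 0 → (starRingEnd ℂ z).im ≠ 0 := by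
    intro z hz
    simpa using hz
  have hRm : ∀ z : ℂ, z.im ≠ 0 → ∀ h, R z h ∈ A.domain := by
    intro z hz h
    have : R z h ∈ (A.domain : Set H) := by
      rw [← (hR z hz).2.1]
      exact ⟨h, rfl⟩
    exact this
  have hAR : ∀ z : ℂ, ∀ hz : z.im ≠ 0, ∀ h, A ⟨R z h, hRm z hz h⟩ = h + z • R z h := by
    intro z hz h
    have := (hR z hz).2.2 h (hRm z hz h)
    rw [← sub_eq_iff_eq_add]
    exact this
  have hRinv : ∀ z : ℂ, z.im ≠ 0 → ∀ x : A.domain, R z (A x - z • (x : H)) = x := by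
    rintro z hz ⟨x, hx⟩
    obtain ⟨h, rfl⟩ : x ∈ Set.range (R z) := by rw [(hR z hz).2.1]; exact hx
    rw [hAR z hz]
    simp
  have hAsym : ∀ x y : A.domain, inner ℂ (A x) (y : H) = inner ℂ (x : H) (A y) := by
    have := A.adjoint_isFormalAdjoint hAdense
    rw [hAsa] at this
    exact this
  have hLsym : ∀ x y : L.domain, inner ℂ (L x) (y : K) = inner ℂ (x : K) (L y) := by
    have := L.adjoint_isFormalAdjoint hLdense
    rw [hLsa] at this
    exact this
  have hRadj : ∀ z : ℂ, z.im ≠ 0 → ∀ h k : H,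
      inner ℂ (R z h) k = inner ℂ h (R (starRingEnd ℂ z) k) := by
    intro z hz h k
    have h1 := hAsym ⟨R z h, hRm z hz h⟩ ⟨R (starRingEnd ℂ z) k, hRm _ (hc z hz) k⟩
    rw [hAR z hz, hAR _ (hc z hz)] at h1
    simp only [inner_add_left, inner_add_right, inner_smul_left, inner_smul_right] at h1
    linear_combination -h1
  have hRres : ∀ z w : ℂ, z.im ≠ 0 → w.im ≠ 0 → ∀ h : H,
      (z - w) • R z (R w h) = R z h - R w h := by
    intro z w hz hw h
    have h1 := hRinv z hz ⟨R w h, hRm w hw h⟩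
    rw [hAR w hw] at h1
    simp only [map_add, map_sub, map_smul] at h1
    rw [sub_smul]
    linear_combination (norm := module) (-1 : ℂ) • h1
  have hΓadj : ∀ z : ℂ, z.im ≠ 0 → ∀ h k : K,
      inner ℂ (Γ z h) k = inner ℂ h (Γ (starRingEnd ℂ z) k) := by
    intro z hz h k
    have m1 := (hΓ z hz).1 h
    have m2 := (hΓ _ (hc z hz)).1 k
    have h1 := (hΓ z hz).2.1 h m1
    have h2 := (hΓ _ (hc z hz)).2.1 k m2
    have h3 := hLsym ⟨_, m1⟩ ⟨_, m2⟩
    have h4 : inner ℂ (Q z (Γ z h)) (Γ (starRingEnd ℂ z) k)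
        = inner ℂ (Γ z h) (Q (starRingEnd ℂ z) (Γ (starRingEnd ℂ z) k)) := by
      rw [← hQ1 z hz, adjoint_inner_right]
    calc inner ℂ (Γ z h) k
        = inner ℂ (Γ z h) (Q (starRingEnd ℂ z) (Γ (starRingEnd ℂ z) k) + L ⟨_, m2⟩) := by rw [h2]
      _ = inner ℂ (Q z (Γ z h) + L ⟨_, m1⟩) (Γ (starRingEnd ℂ z) k) := by
          rw [inner_add_left, inner_add_right, h4, ← h3]
      _ = _ := by rw [h1]
  have hΓres : ∀ z w : ℂ, z.im ≠ 0 → w.im ≠ 0 → ∀ k : K,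
      Γ z ((Q z - Q w) (Γ w k)) = Γ w k - Γ z k := by
    intro z w hz hw k
    have m := (hΓ w hw).1 k
    have h1 := (hΓ w hw).2.1 k m
    have h2 := (hΓ z hz).2.2 ⟨_, m⟩
    have h3 : Q z (Γ w k) + L ⟨_, m⟩ = (Q z - Q w) (Γ w k) + k := by
      rw [sub_apply]
      linear_combination (norm := module) (1 : ℂ) • h1
    simp only [h3, map_add] at h2
    exact eq_sub_of_add_eq h2
  have hGR : ∀ z w : ℂ, z.im ≠ 0 → w.im ≠ 0 → ∀ k : K,
      (z - w) • R z (G w k) = G z k - G w k := by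
    intro z w hz hw k
    have := congrArg (fun T => T k) (hG1 z w hz hw)
    simp only [add_apply, smul_apply, comp_apply] at this
    rw [this]
    abel
  have hGaR : ∀ z w : ℂ, z.im ≠ 0 → w.im ≠ 0 → ∀ h : H,
      (z - w) • adjoint (G (starRingEnd ℂ z)) (R w h)
        = adjoint (G (starRingEnd ℂ z)) h - adjoint (G (starRingEnd ℂ w)) h := by
    intro z w hz hw h
    apply ext_inner_left ℂ
    intro v
    have h1 := hGR _ _ (hc w hw) (hc z hz) v
    have h2 := hRadj _ (hc w hw) (G (starRingEnd ℂ z) v) h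
    rw [conj_conj] at h2
    rw [inner_smul_right, inner_sub_right, adjoint_inner_right, adjoint_inner_right,
      adjoint_inner_right, ← h2]
    have h3 := congrArg (fun x => inner ℂ x h) h1
    simp only [inner_smul_left, inner_sub_left, map_sub, conj_conj] at h3
    linear_combination -h3
  have hGG : ∀ z w : ℂ, z.im ≠ 0 → w.im ≠ 0 → ∀ k : K,
      (z - w) • adjoint (G (starRingEnd ℂ z)) (G w k) = (Q z - Q w) k := by
    intro z w hz hw k
    have := congrArg (fun T => T k) (hQ2 w z hw hz)
    simp only [sub_apply, smul_apply, comp_apply] at this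
    rw [sub_apply, ← neg_sub, ← neg_sub (Q w k), this, neg_smul]
  let S : ℂ → H →L[ℂ] H := fun z =>
    R z - (G z).comp ((Γ z).comp (adjoint (G (starRingEnd ℂ z))))
  have hS : ∀ z h, S z h = R z h - G z (Γ z (adjoint (G (starRingEnd ℂ z)) h)) :=
    fun z h => rfl
  have hSinj : ∀ z : ℂ, z.im ≠ 0 → Function.Injective (S z) := by
    intro z hz
    rw [injective_iff_map_eq_zero]
    intro h h0
    rw [hS, sub_eq_zero] at h0
    have : R z h ∈ (A.domain : Set H) ∩ closure (Set.range (G z)) :=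
      ⟨hRm z hz h, subset_closure (h0 ▸ ⟨_, rfl⟩)⟩
    rw [hG3 z hz] at this
    exact (hR z hz).1 (by rw [map_zero]; exact this)
  have hSadj : ∀ z : ℂ, z.im ≠ 0 → ∀ h k : H,
      inner ℂ (S z h) k = inner ℂ h (S (starRingEnd ℂ z) k) := by
    intro z hz h k
    rw [hS, hS, inner_sub_left, inner_sub_right, hRadj z hz, conj_conj,
      ← adjoint_inner_right (G z), hΓadj z hz, adjoint_inner_left]
  have hSres : ∀ z w : ℂ, z.im ≠ 0 → w.im ≠ 0 → ∀ h : H,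
      (z - w) • S z (S w h) = S z h - S w h := by
    intro z w hz hw h
    have e1 := hRres z w hz hw h
    have e2 := hGR z w hz hw (Γ w (adjoint (G (starRingEnd ℂ w)) h))
    have e3 := congrArg (fun x => G z (Γ z x)) (hGaR z w hz hw h)
    have e4 := congrArg (fun x => G z (Γ z x))
      (hGG z w hz hw (Γ w (adjoint (G (starRingEnd ℂ w)) h)))
    simp only [hΓres z w hz hw] at e4
    simp only [map_smul, map_sub] at e3 e4
    simp only [hS, map_sub, smul_sub, e1, e2, e3, e4]
    abel
  have hSres' : ∀ z w : ℂ, z.im ≠ 0 → w.im ≠ 0 → ∀ h : H,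
      S z h = S w (h + (z - w) • S z h) := by
    intro z w hz hw h
    have := hSres w z hw hz h
    rw [map_add, map_smul, ← neg_sub w z, neg_smul, this]
    abel
  obtain ⟨A₁, hd, hsa, hA₁⟩ := pseudoRes_aux S hSinj hSadj hSres'
  have hI : (I : ℂ).im ≠ 0 := by simp
  refine ⟨A₁, hd, hsa, fun z hz => ⟨hSinj z hz, hA₁ z hz⟩, ?_, ?_⟩
  · have hd2 : Dense ((A.domain ⊓ A₁.domain : Submodule ℂ H) : Set H) := by
      rw [Submodule.dense_iff_topologicalClosure_eq_top, Submodule.topologicalClosure_eq_top_iff,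
        Submodule.eq_bot_iff]
      intro y hy
      have hcI := hc I hI
      have hz : R (starRingEnd ℂ I) y
          ∈ (A.domain : Set H) ∩ closure (Set.range (G (starRingEnd ℂ I))) := by
        refine ⟨hRm _ hcI y, ?_⟩
        have : R (starRingEnd ℂ I) y
            ∈ ((LinearMap.range (G (starRingEnd ℂ I)).toLinearMap).topologicalClosure) := by
          rw [← Submodule.orthogonal_orthogonal_eq_closure, Submodule.mem_orthogonal]
          intro u hu
          have hu0 : adjoint (G (starRingEnd ℂ I)) u = 0 := by
            apply ext_inner_left ℂ
            intro v
            rw [adjoint_inner_right, inner_zero_right]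
            exact (Submodule.mem_orthogonal _ _).1 hu _ ⟨v, rfl⟩
          rw [← hRadj I hI]
          apply (Submodule.mem_orthogonal _ _).1 hy
          refine ⟨hRm I hI u, ?_⟩
          have hSu : S I u = R I u := by rw [hS, hu0]; simp
          rw [← hSu, ← (hA₁ I hI).1]
          exact ⟨u, rfl⟩
        exact this
      rw [hG3 _ hcI] at hz
      exact (hR _ hcI).1 (by rw [map_zero]; exact hz)
    exact hd2
  · intro x h1 h2
    obtain ⟨h, rfl⟩ : x ∈ Set.range (S I) := by rw [(hA₁ I hI).1]; exact h2
    have h3 := (hA₁ I hI).2 h h2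
    have h4 : G I (Γ I (adjoint (G (starRingEnd ℂ I)) h))
        ∈ (A.domain : Set H) ∩ closure (Set.range (G I)) := by
      refine ⟨?_, subset_closure ⟨_, rfl⟩⟩
      have := A.domain.sub_mem (hRm I hI h) h1
      rw [hS, sub_sub_cancel] at this
      exact this
    rw [hG3 I hI] at h4
    have h5 : S I h = R I h := by
      rw [hS, Set.mem_singleton_iff.1 h4, sub_zero]
    have h6 : (⟨S I h, h1⟩ : A.domain) = ⟨R I h, hRm I hI h⟩ := Subtype.ext h5
    rw [h6, hAR I hI, ← h5]
    exact sub_eq_iff_eq_add.1 h3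
end

section
/- Let ζ ∈ ℂ with Im ζ > 0 and Re ζ ≠ 0, and let a, b ∈ ℝ³ with a ≠ b; set r = |a − b|. Then ∫_{ℝ³} g_{ζ,a}(x) · conj(g_{ζ,b}(x)) dx = (e^{iζr} − e^{−i·conj(ζ)·r}) / (4πr·(ζ² − conj(ζ)²)). -/
open MeasureTheory Complex Real

/-- The Green function `g_{ζ,a}(x) = e^{iζ|x-a|}/(4π|x-a|)` of the Helmholtz operator
`-Δ - ζ²` in `ℝ³`. -/
noncomputable def greenFn (ζ : ℂ) (a x : EuclideanSpace ℝ (Fin 3)) : ℂ :=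
  Complex.exp (Complex.I * ζ * (‖x - a‖ : ℝ)) / ((4 * Real.pi * ‖x - a‖ : ℝ) : ℂ)

lemma map_sq_add_sq : (volume : Measure (ℝ × ℝ)).map (fun p => p.1 ^ 2 + p.2 ^ 2) =
    ENNReal.ofReal π • (volume : Measure ℝ).restrict (Set.Ioi 0) := by
  have hm : Measurable (fun p : ℝ × ℝ => p.1 ^ 2 + p.2 ^ 2) := by fun_prop
  ext s hs
  have himg : (fun x : ℝ => x ^ 2) '' Set.Ioi 0 = Set.Ioi 0 := by
    ext y
    constructor
    · rintro ⟨x, hx, rfl⟩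
      have hx' : (0 : ℝ) < x := hx
      exact pow_pos hx' 2
    · intro hy
      exact ⟨√y, Real.sqrt_pos.2 hy, Real.sq_sqrt (le_of_lt hy)⟩
  have hR : (volume : Measure ℝ).restrict (Set.Ioi 0) s =
      2 * ∫⁻ x in Set.Ioi (0 : ℝ), ENNReal.ofReal x * s.indicator 1 (x ^ 2) := by
    rw [← lintegral_indicator_one hs]
    conv_lhs => rw [← himg]
    rw [lintegral_image_eq_lintegral_abs_deriv_mul measurableSet_Ioi
      (f' := fun x => 2 * x) (fun x _ => by
        simpa using (hasDerivAt_pow 2 x).hasDerivWithinAt)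
      (fun x hx y hy h => by
        exact (pow_left_inj₀ (le_of_lt hx) (le_of_lt hy) two_ne_zero).1 h)]
    rw [← lintegral_const_mul _ (by
      refine Measurable.mul (by fun_prop) ?_
      exact (measurable_one.indicator hs).comp (by fun_prop))]
    refine setLIntegral_congr_fun measurableSet_Ioi fun x hx => ?_
    have hx' : 0 < x := hx
    rw [abs_of_pos (by positivity), ENNReal.ofReal_mul (by norm_num), mul_assoc, ENNReal.ofReal_ofNat]
  rw [Measure.map_apply hm hs, Measure.smul_apply, hR, ← lintegral_indicator_one (hm hs),
    ← lintegral_comp_polarCoord_symm, polarCoord_target, Measure.volume_eq_prod,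
    ← Measure.prod_restrict]
  have : ∀ p : ℝ × ℝ, ENNReal.ofReal p.1 • ((fun p : ℝ × ℝ => p.1 ^ 2 + p.2 ^ 2) ⁻¹' s).indicator
      (1 : ℝ × ℝ → ENNReal) (polarCoord.symm p) =
      (ENNReal.ofReal p.1 * s.indicator 1 (p.1 ^ 2)) * (fun _ => 1) p.2 := by
    intro p
    have h : (p.1 * Real.cos p.2) ^ 2 + (p.1 * Real.sin p.2) ^ 2 = p.1 ^ 2 := by
      rw [mul_pow, mul_pow, ← mul_add, Real.cos_sq_add_sin_sq, mul_one]
    have h' : (polarCoord.symm p).1 ^ 2 + (polarCoord.symm p).2 ^ 2 = p.1 ^ 2 := h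
    have hmem : (polarCoord.symm p ∈ (fun p : ℝ × ℝ => p.1 ^ 2 + p.2 ^ 2) ⁻¹' s) =
        (p.1 ^ 2 ∈ s) := by
      rw [← h']; rfl
    by_cases hp : p.1 ^ 2 ∈ s
    · rw [Set.indicator_of_mem hp, Set.indicator_of_mem (hmem.mpr hp)]
      simp
    · rw [Set.indicator_of_notMem hp, Set.indicator_of_notMem (fun h => hp (hmem.mp h))]
      simp
  rw [lintegral_congr this]
  rw [lintegral_prod_mul (f := fun x : ℝ => ENNReal.ofReal x * s.indicator 1 (x ^ 2))
    (g := fun _ : ℝ => 1)]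
  · simp only [lintegral_const, one_mul, Measure.restrict_apply MeasurableSet.univ,
      Set.univ_inter, Real.volume_Ioo, smul_eq_mul]
    rw [show π - -π = 2 * π by ring, ENNReal.ofReal_mul (by norm_num)]
    rw [ENNReal.ofReal_ofNat]
    ring
  · refine Measurable.aemeasurable (Measurable.mul (by fun_prop) ?_)
    exact (measurable_one.indicator hs).comp (by fun_prop)
  · fun_prop

lemma mp_cyl : MeasurePreserving (fun x : EuclideanSpace ℝ (Fin 3) => (x 0, x 1 ^ 2 + x 2 ^ 2))
    volume (ENNReal.ofReal π • (volume : Measure (ℝ × ℝ)).restrict (Set.univ ×ˢ Set.Ioi 0)) := by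
  have h1 := PiLp.volume_preserving_ofLp (Fin 3)
  have h2 := volume_preserving_piFinSuccAbove (fun _ : Fin 3 => ℝ) 0
  have h3 := volume_preserving_finTwoArrow ℝ
  have h4 : MeasurePreserving (fun p : ℝ × ℝ => p.1 ^ 2 + p.2 ^ 2) volume
    (ENNReal.ofReal π • (volume : Measure ℝ).restrict (Set.Ioi 0)) := ⟨by fun_prop, map_sq_add_sq⟩
  have h5 := (MeasurePreserving.id (volume : Measure ℝ)).prod (h4.comp h3)
  have h6 := (h5.comp h2).comp h1
  convert! h6 using 1
  rw [Measure.prod_smul_right, Measure.volume_eq_prod, ← Measure.prod_restrict,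
    Measure.restrict_univ]

noncomputable def prol (r : ℝ) (p : ℝ × ℝ) : ℝ × ℝ :=
  ((p.1 * p.2 + r ^ 2) / (2 * r), (p.1 ^ 2 - r ^ 2) * (r ^ 2 - p.2 ^ 2) / (4 * r ^ 2))

noncomputable def prolD (r : ℝ) (p : ℝ × ℝ) : ℝ × ℝ →L[ℝ] ℝ × ℝ :=
  (Matrix.toLin (.finTwoProd ℝ) (.finTwoProd ℝ)
    !![p.2 / (2 * r), p.1 / (2 * r); 2 * p.1 * (r ^ 2 - p.2 ^ 2) / (4 * r ^ 2),
      - (2 * p.2 * (p.1 ^ 2 - r ^ 2) / (4 * r ^ 2))]).toContinuousLinearMap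

lemma prol_hasFDerivAt (r : ℝ) (p : ℝ × ℝ) : HasFDerivAt (prol r) (prolD r p) p := by
  unfold prolD
  rw [Matrix.toLin_finTwoProd_toContinuousLinearMap]
  have h1 : HasFDerivAt (fun p : ℝ × ℝ => p.1) (ContinuousLinearMap.fst ℝ ℝ ℝ) p := hasFDerivAt_fst
  have h2 : HasFDerivAt (fun p : ℝ × ℝ => p.2) (ContinuousLinearMap.snd ℝ ℝ ℝ) p := hasFDerivAt_snd
  have h3 := ((h1.mul h2).add_const (r ^ 2)).mul_const (2 * r)⁻¹
  have h4 := (((h1.pow 2).sub_const (r ^ 2)).mul ((h2.pow 2).const_sub (r ^ 2))).mul_const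
    (4 * r ^ 2)⁻¹
  refine (h3.prodMk h4).congr_fderiv ?_
  ext <;> simp <;> ring

lemma prolD_det (r : ℝ) (hr : 0 < r) (p : ℝ × ℝ) :
    (prolD r p).det = - ((p.1 ^ 2 - p.2 ^ 2) / (4 * r)) := by
  unfold prolD
  simp only [LinearMap.det_toContinuousLinearMap, LinearMap.det_toLin, Matrix.det_fin_two_of]
  field_simp
  ring

lemma prol_norm1 (r : ℝ) (hr : 0 < r) (p : ℝ × ℝ) (hp : p ∈ Set.Ioi r ×ˢ Set.Ioo (-r) r) :
    √((prol r p).1 ^ 2 + (prol r p).2) = (p.1 + p.2) / 2 := by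
  obtain ⟨h1, h2, h3⟩ := hp
  simp only [Set.mem_Ioi] at h1
  rw [show (prol r p).1 ^ 2 + (prol r p).2 = ((p.1 + p.2) / 2) ^ 2 by
    simp only [prol]; field_simp; ring]
  exact Real.sqrt_sq (by linarith)

lemma prol_norm2 (r : ℝ) (hr : 0 < r) (p : ℝ × ℝ) (hp : p ∈ Set.Ioi r ×ˢ Set.Ioo (-r) r) :
    √(((prol r p).1 - r) ^ 2 + (prol r p).2) = (p.1 - p.2) / 2 := by
  obtain ⟨h1, h2, h3⟩ := hp
  simp only [Set.mem_Ioi] at h1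
  rw [show ((prol r p).1 - r) ^ 2 + (prol r p).2 = ((p.1 - p.2) / 2) ^ 2 by
    simp only [prol]; field_simp; ring]
  exact Real.sqrt_sq (by linarith)

lemma prol_injOn (r : ℝ) (hr : 0 < r) : Set.InjOn (prol r) (Set.Ioi r ×ˢ Set.Ioo (-r) r) := by
  intro p hp q hq h
  have a1 := prol_norm1 r hr p hp
  have a2 := prol_norm2 r hr p hp
  rw [h, prol_norm1 r hr q hq] at a1
  rw [h, prol_norm2 r hr q hq] at a2
  ext <;> linarith

lemma prol_image (r : ℝ) (hr : 0 < r) :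
    prol r '' (Set.Ioi r ×ˢ Set.Ioo (-r) r) = Set.univ ×ˢ Set.Ioi 0 := by
  ext ⟨z, u⟩
  constructor
  · rintro ⟨⟨s, t⟩, ⟨h1, h2, h3⟩, h⟩
    simp only [Set.mem_Ioi] at h1 h2 h3
    refine ⟨trivial, ?_⟩
    rw [← h]
    simp only [prol, Set.mem_Ioi]
    have : 0 < s ^ 2 - r ^ 2 := by nlinarith
    have : 0 < r ^ 2 - t ^ 2 := by nlinarith
    positivity
  · rintro ⟨-, hu⟩
    simp only [Set.mem_Ioi] at hu
    have e1 : √(z ^ 2 + u) ^ 2 = z ^ 2 + u := Real.sq_sqrt (by positivity)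
    have e2 : √((z - r) ^ 2 + u) ^ 2 = (z - r) ^ 2 + u := Real.sq_sqrt (by positivity)
    have l1 : |z| < √(z ^ 2 + u) := Real.lt_sqrt_of_sq_lt (by rw [sq_abs]; linarith)
    have l2 : |z - r| < √((z - r) ^ 2 + u) := Real.lt_sqrt_of_sq_lt (by rw [sq_abs]; linarith)
    set A := √(z ^ 2 + u)
    set B := √((z - r) ^ 2 + u)
    obtain ⟨l3, l4⟩ := abs_lt.1 l1
    obtain ⟨l5, l6⟩ := abs_lt.1 l2
    have hA : 0 < A := lt_of_le_of_lt (abs_nonneg _) l1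
    have hB : 0 < B := lt_of_le_of_lt (abs_nonneg _) l2
    refine ⟨(A + B, A - B), ⟨?_, ?_, ?_⟩, ?_⟩
    · simp only [Set.mem_Ioi]; linarith
    · simp only
      have : B < A + r := by
        refine lt_of_pow_lt_pow_left₀ 2 (by positivity) ?_
        nlinarith
      linarith
    · simp only
      have : A < B + r := by
        refine lt_of_pow_lt_pow_left₀ 2 (by positivity) ?_
        nlinarith
      linarith
    · simp only [prol]
      ext
      · simp only
        rw [show (A + B) * (A - B) = A ^ 2 - B ^ 2 by ring, e1, e2]
        field_simp; ring
      · simp only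
        rw [show ((A + B) ^ 2 - r ^ 2) * (r ^ 2 - (A - B) ^ 2) =
          2 * r ^ 2 * (A ^ 2 + B ^ 2) - (A ^ 2 - B ^ 2) ^ 2 - r ^ 4 by ring, e1, e2]
        field_simp; ring

noncomputable def G0 (ζ : ℂ) (r : ℝ) (p : ℝ × ℝ) : ℂ :=
  (Complex.exp (Complex.I * ζ * (√(p.1 ^ 2 + p.2) : ℝ)) / ((4 * Real.pi * √(p.1 ^ 2 + p.2) : ℝ) : ℂ)) *
  (starRingEnd ℂ) (Complex.exp (Complex.I * ζ * (√((p.1 - r) ^ 2 + p.2) : ℝ)) /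
    ((4 * Real.pi * √((p.1 - r) ^ 2 + p.2) : ℝ) : ℂ))

lemma G0_meas (ζ : ℂ) (r : ℝ) : Measurable (G0 ζ r) := by
  unfold G0
  refine Measurable.mul (by fun_prop) ?_
  exact Complex.continuous_conj.measurable.comp (by fun_prop)

lemma G0_prol (ζ : ℂ) (r : ℝ) (hr : 0 < r) (p : ℝ × ℝ) (hp : p ∈ Set.Ioi r ×ˢ Set.Ioo (-r) r) :
    |(prolD r p).det| • G0 ζ r (prol r p) =
      (1 / (16 * π ^ 2 * r) : ℂ) * (Complex.exp ((-ζ.im : ℂ) * p.1) *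
        Complex.exp ((Complex.I * ζ.re) * p.2)) := by
  rw [G0, prol_norm1 r hr p hp, prol_norm2 r hr p hp, prolD_det r hr]
  obtain ⟨h1, h2, h3⟩ := hp
  simp only [Set.mem_Ioi] at h1
  have s1 : 0 < p.1 + p.2 := by linarith
  have s2 : 0 < p.1 - p.2 := by linarith
  rw [abs_neg, abs_of_pos (by
    rw [show p.1 ^ 2 - p.2 ^ 2 = (p.1 + p.2) * (p.1 - p.2) by ring]; positivity)]
  rw [map_div₀, Complex.conj_ofReal, ← Complex.exp_conj, ← Complex.exp_add, div_mul_div_comm,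
    ← Complex.exp_add, Complex.real_smul]
  have e : Complex.I * ζ * (((p.1 + p.2) / 2 : ℝ) : ℂ) +
      (starRingEnd ℂ) (Complex.I * ζ * (((p.1 - p.2) / 2 : ℝ) : ℂ)) =
      (-ζ.im : ℂ) * p.1 + (Complex.I * ζ.re) * p.2 := by
    rw [map_mul, Complex.conj_ofReal]
    apply Complex.ext <;> simp <;> ring
  rw [e]
  have c1 : (p.1 + p.2 : ℂ) ≠ 0 := by exact_mod_cast s1.ne'
  have c2 : (p.1 - p.2 : ℂ) ≠ 0 := by exact_mod_cast s2.ne'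
  have c3 : (r : ℂ) ≠ 0 := by exact_mod_cast hr.ne'
  have c4 : (π : ℂ) ≠ 0 := by exact_mod_cast Real.pi_ne_zero
  push_cast
  field_simp
  ring

lemma G0_integral (ζ : ℂ) (hζ : 0 < ζ.im) (hre : ζ.re ≠ 0) (r : ℝ) (hr : 0 < r) :
    IntegrableOn (G0 ζ r) (Set.univ ×ˢ Set.Ioi 0) volume ∧
    ∫ p in Set.univ ×ˢ Set.Ioi 0, G0 ζ r p =
      (1 / (16 * π ^ 2 * r) : ℂ) * ((- Complex.exp ((-ζ.im : ℂ) * r) / (-ζ.im : ℂ)) *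
        ((Complex.exp ((Complex.I * ζ.re) * r) - Complex.exp ((Complex.I * ζ.re) * (-r : ℝ))) /
          (Complex.I * ζ.re))) := by
  have hms : MeasurableSet (Set.Ioi r ×ˢ Set.Ioo (-r) r) := measurableSet_Ioi.prod measurableSet_Ioo
  have hre' : ((-ζ.im : ℂ)).re < 0 := by simpa using hζ
  rw [← prol_image r hr, integrableOn_image_iff_integrableOn_abs_det_fderiv_smul volume hms
    (fun p _ => (prol_hasFDerivAt r p).hasFDerivWithinAt) (prol_injOn r hr),
    integral_image_eq_integral_abs_det_fderiv_smul volume hms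
    (fun p _ => (prol_hasFDerivAt r p).hasFDerivWithinAt) (prol_injOn r hr),
    integrableOn_congr_fun (fun p hp => G0_prol ζ r hr p hp) hms,
    setIntegral_congr_fun hms (fun p hp => G0_prol ζ r hr p hp)]
  constructor
  · refine Integrable.const_mul ?_ _
    rw [Measure.volume_eq_prod, ← Measure.prod_restrict]
    refine Integrable.mul_prod (f := fun x : ℝ => Complex.exp ((-ζ.im : ℂ) * x))
      (g := fun x : ℝ => Complex.exp ((Complex.I * ζ.re) * x)) ?_ ?_
    · exact integrableOn_exp_mul_complex_Ioi hre' r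
    · refine IntegrableOn.mono_set ?_ Set.Ioo_subset_Icc_self
      exact Continuous.integrableOn_Icc (by fun_prop)
  · rw [integral_const_mul, Measure.volume_eq_prod,
      setIntegral_prod_mul (fun x : ℝ => Complex.exp ((-ζ.im : ℂ) * x))
      (fun x : ℝ => Complex.exp ((Complex.I * ζ.re) * x)),
      integral_exp_mul_complex_Ioi hre', ← integral_Ioc_eq_integral_Ioo,
      ← intervalIntegral.integral_of_le (by linarith),
      integral_exp_mul_complex (by simpa using hre)]

lemma exists_mp (a b : EuclideanSpace ℝ (Fin 3)) (hab : a ≠ b) :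
    ∃ Φ : EuclideanSpace ℝ (Fin 3) → ℝ × ℝ, MeasurePreserving Φ volume
      (ENNReal.ofReal π • (volume : Measure (ℝ × ℝ)).restrict (Set.univ ×ˢ Set.Ioi 0)) ∧
      ∀ x, ‖x - a‖ = √((Φ x).1 ^ 2 + (Φ x).2) ∧
        ‖x - b‖ = √(((Φ x).1 - ‖a - b‖) ^ 2 + (Φ x).2) := by
  have hn : ‖b - a‖ ≠ 0 := norm_ne_zero_iff.2 (sub_ne_zero.2 hab.symm)
  obtain ⟨B, hB⟩ := Orthonormal.exists_orthonormalBasis_extension_of_card_eq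
    (𝕜 := ℝ) (E := EuclideanSpace ℝ (Fin 3)) (ι := Fin 3) (by simp)
    (v := fun _ => (‖b - a‖⁻¹ : ℝ) • (b - a)) (s := {0}) (by
      constructor
      · intro i
        simp [norm_smul, hn]
      · intro i j hij
        exact absurd (Subsingleton.elim i j) hij)
  have hB0 := hB 0 rfl
  have hba : B.repr (b - a) = EuclideanSpace.single 0 ‖a - b‖ := by
    have : b - a = ‖b - a‖ • B 0 := by rw [hB0, smul_smul, mul_inv_cancel₀ hn, one_smul]
    rw [this, map_smul, B.repr_self, norm_sub_rev a b]
    ext i; simp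
  refine ⟨fun x => (B.repr (x - a) 0, B.repr (x - a) 1 ^ 2 + B.repr (x - a) 2 ^ 2), ?_, ?_⟩
  · exact mp_cyl.comp (B.measurePreserving_repr.comp (measurePreserving_sub_right volume a))
  · intro x
    constructor
    · rw [← B.repr.norm_map, EuclideanSpace.norm_eq, Fin.sum_univ_three]
      simp only [Real.norm_eq_abs, sq_abs, add_assoc]
    · rw [← B.repr.norm_map, show x - b = (x - a) - (b - a) by abel, map_sub, hba,
        EuclideanSpace.norm_eq, Fin.sum_univ_three]
      simp [sq_abs, add_assoc]

/-- For `Im ζ > 0`, `Re ζ ≠ 0` and distinct `a b ∈ ℝ³`, with `r = |a - b|`,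
the product `g_{ζ,a} · conj (g_{ζ,b})` is integrable and
`∫ g_{ζ,a}(x) conj (g_{ζ,b}(x)) dx = (e^{iζr} - e^{-i conj(ζ) r}) / (4πr (ζ² - conj(ζ)²))`. -/
theorem stmt4 (ζ : ℂ) (hζ : 0 < ζ.im) (hre : ζ.re ≠ 0)
    (a b : EuclideanSpace ℝ (Fin 3)) (hab : a ≠ b) :
    Integrable (fun x => greenFn ζ a x * (starRingEnd ℂ) (greenFn ζ b x))
      (volume : Measure (EuclideanSpace ℝ (Fin 3))) ∧
    ∫ x : EuclideanSpace ℝ (Fin 3), greenFn ζ a x * (starRingEnd ℂ) (greenFn ζ b x) =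
      (Complex.exp (Complex.I * ζ * (‖a - b‖ : ℝ)) -
        Complex.exp (-Complex.I * (starRingEnd ℂ ζ) * (‖a - b‖ : ℝ))) /
      (((4 * Real.pi * ‖a - b‖ : ℝ) : ℂ) * (ζ ^ 2 - (starRingEnd ℂ ζ) ^ 2)) := by

  obtain ⟨Φ, hΦ, hn⟩ := exists_mp a b hab
  have hr : 0 < ‖a - b‖ := norm_pos_iff.2 (sub_ne_zero.2 hab)
  set r := ‖a - b‖
  obtain ⟨hi, hI⟩ := G0_integral ζ hζ hre r hr
  have hf : (fun x => greenFn ζ a x * (starRingEnd ℂ) (greenFn ζ b x)) = G0 ζ r ∘ Φ := by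
    funext x
    simp only [greenFn, G0, Function.comp, (hn x).1, (hn x).2]
  rw [hf]
  constructor
  · rw [hΦ.integrable_comp (G0_meas ζ r).aestronglyMeasurable]
    exact hi.smul_measure ENNReal.ofReal_ne_top
  · have : ∫ x, (G0 ζ r ∘ Φ) x = ∫ y, G0 ζ r y ∂(ENNReal.ofReal π •
        (volume : Measure (ℝ × ℝ)).restrict (Set.univ ×ˢ Set.Ioi 0)) := by
      rw [← hΦ.map_eq, integral_map hΦ.measurable.aemeasurable
        (G0_meas ζ r).aestronglyMeasurable]
      rfl
    rw [this, integral_smul_measure, hI, ENNReal.toReal_ofReal Real.pi_pos.le]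
    have e1 : Complex.exp (Complex.I * ζ * r) =
        Complex.exp ((-ζ.im : ℂ) * r) * Complex.exp ((Complex.I * ζ.re) * r) := by
      rw [← Complex.exp_add]; congr 1
      apply Complex.ext <;> simp
    have e2 : Complex.exp (-Complex.I * (starRingEnd ℂ ζ) * r) =
        Complex.exp ((-ζ.im : ℂ) * r) * Complex.exp ((Complex.I * ζ.re) * (-r : ℝ)) := by
      rw [← Complex.exp_add]; congr 1
      apply Complex.ext <;> simp
    have e3 : ζ ^ 2 - (starRingEnd ℂ ζ) ^ 2 = 4 * Complex.I * ζ.re * ζ.im := by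
      apply Complex.ext <;> simp [pow_two] <;> ring
    rw [e1, e2, e3]
    have c1 : (ζ.re : ℂ) ≠ 0 := by exact_mod_cast hre
    have c2 : (ζ.im : ℂ) ≠ 0 := by exact_mod_cast hζ.ne'
    have c3 : (r : ℂ) ≠ 0 := by exact_mod_cast hr.ne'
    have c4 : (π : ℂ) ≠ 0 := by exact_mod_cast Real.pi_ne_zero
    rw [Complex.real_smul]
    push_cast
    field_simp [Complex.I_ne_zero]
    ring
end

section
/- Let φ : ℝ³ → ℂ be a smooth compactly supported function and let ζ ∈ ℂ with Im ζ > 0. Then for every x ∈ ℝ³, φ(x) = ∫_{ℝ³} (e^{iζ|x−y|}/(4π|x−y|)) · ( −Δφ(y) − ζ²·φ(y) ) dy, where Δφ denotes the Laplacian of φ, i.e. the sum of its three second partial derivatives. -/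
open MeasureTheory Complex Real

/-- The Laplacian `Δφ(y) = Σᵢ ∂²φ/∂yᵢ²` of a function `φ : ℝ³ → ℂ`, expressed via iterated
Fréchet derivatives in the coordinate directions. -/
noncomputable def laplacian3 (φ : EuclideanSpace ℝ (Fin 3) → ℂ)
    (y : EuclideanSpace ℝ (Fin 3)) : ℂ :=
  ∑ i : Fin 3,
    fderiv ℝ (fun w => fderiv ℝ φ w (EuclideanSpace.single i (1 : ℝ))) y
      (EuclideanSpace.single i (1 : ℝ))

open Filter Topology Set

lemma ibp_one (f g : EuclideanSpace ℝ (Fin 3) → ℂ) (v : EuclideanSpace ℝ (Fin 3))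
    (hf : ContDiff ℝ 1 f) (hg : ContDiff ℝ 1 g) (hs : HasCompactSupport f ∨ HasCompactSupport g) :
    ∫ x, f x * fderiv ℝ g x v = - ∫ x, fderiv ℝ f x v * g x := by
  have hf' : Continuous (fun x => fderiv ℝ f x v) :=
    (hf.continuous_fderiv (by norm_num)).clm_apply continuous_const
  have hg' : Continuous (fun x => fderiv ℝ g x v) :=
    (hg.continuous_fderiv (by norm_num)).clm_apply continuous_const
  apply integral_mul_fderiv_eq_neg_fderiv_mul_of_integrable
  · apply (hf'.mul hg.continuous).integrable_of_hasCompactSupport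
    rcases hs with h | h
    · exact (h.fderiv_apply (𝕜 := ℝ) v).mul_right
    · exact h.mul_left
  · apply (hf.continuous.mul hg').integrable_of_hasCompactSupport
    rcases hs with h | h
    · exact h.mul_right
    · exact (h.fderiv_apply (𝕜 := ℝ) v).mul_left
  · apply (hf.continuous.mul hg.continuous).integrable_of_hasCompactSupport
    rcases hs with h | h
    · exact h.mul_right
    · exact h.mul_left
  · exact fun x _ => hf.differentiable (by norm_num) x
  · exact fun x _ => hg.differentiable (by norm_num) x

lemma contDiff_pd (f : EuclideanSpace ℝ (Fin 3) → ℂ) (v : EuclideanSpace ℝ (Fin 3))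
    (hf : ContDiff ℝ 2 f) : ContDiff ℝ 1 (fun w => fderiv ℝ f w v) :=
  (hf.fderiv_right (m := 1) (by norm_num)).clm_apply contDiff_const

lemma continuous_pd2 (f : EuclideanSpace ℝ (Fin 3) → ℂ) (v : EuclideanSpace ℝ (Fin 3))
    (hf : ContDiff ℝ 2 f) : Continuous (fun y => fderiv ℝ (fun w => fderiv ℝ f w v) y v) :=
  ((contDiff_pd f v hf).continuous_fderiv (by norm_num)).clm_apply continuous_const

lemma continuous_lap (f : EuclideanSpace ℝ (Fin 3) → ℂ)
    (hf : ContDiff ℝ 2 f) : Continuous (laplacian3 f) := by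
  unfold laplacian3
  exact continuous_finsetSum _ fun i _ => continuous_pd2 f _ hf

lemma hcs_pd2 (f : EuclideanSpace ℝ (Fin 3) → ℂ) (v : EuclideanSpace ℝ (Fin 3))
    (hf : HasCompactSupport f) :
    HasCompactSupport (fun y => fderiv ℝ (fun w => fderiv ℝ f w v) y v) :=
  (hf.fderiv_apply (𝕜 := ℝ) v).fderiv_apply (𝕜 := ℝ) v

lemma hcs_lap (f : EuclideanSpace ℝ (Fin 3) → ℂ)
    (hf : HasCompactSupport f) : HasCompactSupport (laplacian3 f) := by
  have : laplacian3 f = fun y => fderiv ℝ (fun w => fderiv ℝ f w (EuclideanSpace.single 0 (1 : ℝ))) y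
      (EuclideanSpace.single 0 (1 : ℝ)) + fderiv ℝ (fun w => fderiv ℝ f w (EuclideanSpace.single 1 (1 : ℝ))) y
      (EuclideanSpace.single 1 (1 : ℝ)) + fderiv ℝ (fun w => fderiv ℝ f w (EuclideanSpace.single 2 (1 : ℝ))) y
      (EuclideanSpace.single 2 (1 : ℝ)) := by
    funext y
    simp only [laplacian3, Fin.sum_univ_three]
  rw [this]
  exact ((hcs_pd2 f _ hf).add (hcs_pd2 f _ hf)).add (hcs_pd2 f _ hf)

lemma ibp_lap (G φ : EuclideanSpace ℝ (Fin 3) → ℂ)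
    (hG : ContDiff ℝ 2 G) (hφ : ContDiff ℝ 2 φ) (hs : HasCompactSupport φ) :
    ∫ x, G x * laplacian3 φ x = ∫ x, laplacian3 G x * φ x := by
  simp only [laplacian3, Finset.mul_sum, Finset.sum_mul]
  rw [integral_finsetSum, integral_finsetSum]
  · refine Finset.sum_congr rfl fun i _ => ?_
    rw [ibp_one G _ _ (hG.of_le (by norm_num)) (contDiff_pd φ _ hφ)
      (Or.inr (hs.fderiv_apply (𝕜 := ℝ) _)),
      ibp_one _ φ _ (contDiff_pd G _ hG) (hφ.of_le (by norm_num)) (Or.inr hs), neg_neg]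
  · intro i _
    exact ((continuous_pd2 G _ hG).mul hφ.continuous).integrable_of_hasCompactSupport hs.mul_left
  · intro i _
    exact (hG.continuous.mul (continuous_pd2 φ _ hφ)).integrable_of_hasCompactSupport
      (hcs_pd2 φ _ hs).mul_left
noncomputable def hh (ζ : ℂ) (s : ℝ) : ℂ := Complex.exp (Complex.I * ζ * (s : ℝ)) / ((4 * Real.pi * s : ℝ) : ℂ)

noncomputable def hk (ζ : ℂ) (s : ℝ) : ℂ :=
  Complex.exp (Complex.I * ζ * (s : ℝ)) * (Complex.I * ζ * s - 1) / ((8 * Real.pi * s ^ 3 : ℝ) : ℂ)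

noncomputable def hl (ζ : ℂ) (s : ℝ) : ℂ :=
  Complex.exp (Complex.I * ζ * (s : ℝ)) * (3 - 3 * Complex.I * ζ * s - ζ ^ 2 * s ^ 2)
    / ((16 * Real.pi * s ^ 5 : ℝ) : ℂ)

lemma hasDerivAt_expo (ζ : ℂ) (s : ℝ) :
    HasDerivAt (fun s : ℝ => Complex.exp (Complex.I * ζ * (s : ℝ)))
      (Complex.exp (Complex.I * ζ * (s : ℝ)) * (Complex.I * ζ)) s := by
  have h1 : HasDerivAt (fun s : ℝ => Complex.I * ζ * (s : ℂ)) (Complex.I * ζ) s := by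
    simpa using (Complex.ofRealCLM.hasDerivAt (x := s)).const_mul (Complex.I * ζ)
  exact h1.cexp

lemma hasDerivAt_ofReal_pow (n : ℕ) (s : ℝ) :
    HasDerivAt (fun s : ℝ => (s : ℂ) ^ n) (n * (s : ℂ) ^ (n - 1)) s := by
  have h1 : HasDerivAt (fun s : ℝ => (s : ℂ)) 1 s := (hasDerivAt_id s).ofReal_comp
  exact (h1.pow n).congr_deriv (by simp)

lemma hh_deriv (ζ : ℂ) (s : ℝ) (hs : 0 < s) : HasDerivAt (hh ζ) (2 * s * hk ζ s) s := by
  have hpi : (Real.pi : ℂ) ≠ 0 := by exact_mod_cast Real.pi_ne_zero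
  have hsc : (s : ℂ) ≠ 0 := by exact_mod_cast hs.ne'
  have h := (hasDerivAt_expo ζ s).div ((hasDerivAt_ofReal_pow 1 s).const_mul (4 * Real.pi : ℂ))
    (by simp [hpi, hsc])
  have e : hh ζ = fun s : ℝ => Complex.exp (Complex.I * ζ * (s : ℝ)) / (4 * Real.pi * (s : ℂ) ^ 1) := by
    funext t; simp [hh]
  rw [e]
  refine h.congr_deriv ?_
  unfold hk
  push_cast
  field_simp
  ring

lemma hk_deriv (ζ : ℂ) (s : ℝ) (hs : 0 < s) : HasDerivAt (hk ζ) (2 * s * hl ζ s) s := by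
  have hpi : (Real.pi : ℂ) ≠ 0 := by exact_mod_cast Real.pi_ne_zero
  have hsc : (s : ℂ) ≠ 0 := by exact_mod_cast hs.ne'
  have h := ((hasDerivAt_expo ζ s).mul (((hasDerivAt_ofReal_pow 1 s).const_mul
    (Complex.I * ζ)).sub_const 1)).div ((hasDerivAt_ofReal_pow 3 s).const_mul (8 * Real.pi : ℂ))
    (by simp [hpi, hsc])
  have e : hk ζ = fun s : ℝ => Complex.exp (Complex.I * ζ * (s : ℝ)) * (Complex.I * ζ * (s : ℂ) ^ 1 - 1)
      / (8 * Real.pi * (s : ℂ) ^ 3) := by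
    funext t; simp [hk]
  rw [e]
  refine h.congr_deriv ?_
  unfold hl
  simp only [Pi.mul_apply]
  push_cast
  field_simp
  ring_nf
  simp only [Complex.I_sq]
  ring

noncomputable def SS (ε : ℝ) (x y : EuclideanSpace ℝ (Fin 3)) : ℝ := √(‖y - x‖ ^ 2 + ε ^ 2)

lemma SS_pos {ε : ℝ} (hε : 0 < ε) (x y) : 0 < SS ε x y := by
  unfold SS; positivity

lemma SS_contDiff {ε : ℝ} (hε : 0 < ε) (x) : ContDiff ℝ 2 (SS ε x) := by
  unfold SS
  apply ContDiff.sqrt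
  · exact ((contDiff_id.sub contDiff_const).norm_sq ℝ).add contDiff_const
  · intro y; positivity

lemma hh_contDiff (ζ : ℂ) {ε : ℝ} (hε : 0 < ε) (x) : ContDiff ℝ 2 (fun y => hh ζ (SS ε x y)) := by
  have h1 : ContDiff ℝ 2 (fun y => ((SS ε x y : ℝ) : ℂ)) :=
    Complex.ofRealCLM.contDiff.comp (SS_contDiff hε x)
  unfold hh
  push_cast
  simp only [div_eq_mul_inv]
  refine ContDiff.mul (contDiff_const.mul h1).cexp (ContDiff.inv (contDiff_const.mul h1) ?_)
  · intro y
    have := (SS_pos hε x y).ne'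
    have hpi : (Real.pi : ℂ) ≠ 0 := by exact_mod_cast Real.pi_ne_zero
    simp [hpi, this]

lemma SS_hasFDeriv {ε : ℝ} (hε : 0 < ε) (x y v) :
    ∃ L : EuclideanSpace ℝ (Fin 3) →L[ℝ] ℝ, HasFDerivAt (SS ε x) L y ∧
      L v = inner ℝ (y - x) v / SS ε x y := by
  have h1 : HasFDerivAt (fun y => ‖y - x‖ ^ 2 + ε ^ 2) _ y :=
    (((hasFDerivAt_id y).sub_const x).norm_sq).add_const (ε ^ 2)
  have h2 := h1.sqrt (by positivity)
  refine ⟨_, h2, ?_⟩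
  have := (SS_pos hε x y).ne'
  simp [SS] at this ⊢
  rw [← inner_sub_left]
  field_simp

lemma comp_pd {ε : ℝ} (hε : 0 < ε) (f g : ℝ → ℂ)
    (hfg : ∀ s, 0 < s → HasDerivAt f (2 * s * g s) s) (x y v) :
    HasFDerivAt (fun y => f (SS ε x y)) (fderiv ℝ (fun y => f (SS ε x y)) y) y ∧ 
    fderiv ℝ (fun y => f (SS ε x y)) y v = 2 * (inner ℝ (y - x) v : ℝ) * g (SS ε x y) := by
  obtain ⟨L, hL, hLv⟩ := SS_hasFDeriv hε x y v
  have h := (hfg _ (SS_pos hε x y)).hasFDerivAt.comp y hL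
  have h' : HasFDerivAt (fun y => f (SS ε x y)) _ y := h
  refine ⟨h'.differentiableAt.hasFDerivAt, ?_⟩
  rw [h'.fderiv]
  have := (SS_pos hε x y).ne'
  have hsc : ((SS ε x y : ℝ) : ℂ) ≠ 0 := by exact_mod_cast this
  simp [hLv]
  field_simp

lemma pd2 (ζ : ℂ) {ε : ℝ} (hε : 0 < ε) (x y v) :
    fderiv ℝ (fun w => fderiv ℝ (fun y => hh ζ (SS ε x y)) w v) y v =
      2 * (‖v‖ ^ 2 : ℝ) * hk ζ (SS ε x y) + 4 * ((inner ℝ (y - x) v : ℝ) : ℂ) ^ 2 * hl ζ (SS ε x y) := by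
  have e : (fun w => fderiv ℝ (fun y => hh ζ (SS ε x y)) w v) =
      fun w => 2 * (inner ℝ (w - x) v : ℝ) * hk ζ (SS ε x w) := by
    funext w
    exact (comp_pd hε _ _ (hh_deriv ζ) x w v).2
  rw [e]
  obtain ⟨h1, h2⟩ := comp_pd hε _ _ (hk_deriv ζ) x y v
  have h3 : HasFDerivAt (fun w => inner ℝ (w - x) v) _ y :=
    ((hasFDerivAt_id y).sub_const x).inner ℝ (hasFDerivAt_const v y)
  have h4 : HasFDerivAt (fun w => ((inner ℝ (w - x) v : ℝ) : ℂ)) _ y :=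
    Complex.ofRealCLM.hasFDerivAt.comp y h3
  have h5 := (h4.const_mul (2 : ℂ)).mul h1
  erw [h5.fderiv]
  simp [h2]
  ring

lemma lap_hh (ζ : ℂ) {ε : ℝ} (hε : 0 < ε) (x y) :
    laplacian3 (fun y => hh ζ (SS ε x y)) y =
      - ζ ^ 2 * hh ζ (SS ε x y) - 4 * ε ^ 2 * hl ζ (SS ε x y) := by
  unfold laplacian3
  simp only [pd2 ζ hε, Fin.sum_univ_three]
  have hn : ((SS ε x y : ℝ) : ℂ) ^ 2 = ((y 0 - x 0 : ℝ) : ℂ) ^ 2 + ((y 1 - x 1 : ℝ) : ℂ) ^ 2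
      + ((y 2 - x 2 : ℝ) : ℂ) ^ 2 + (ε : ℂ) ^ 2 := by
    have : SS ε x y ^ 2 = (y 0 - x 0) ^ 2 + (y 1 - x 1) ^ 2 + (y 2 - x 2) ^ 2 + ε ^ 2 := by
      unfold SS
      rw [Real.sq_sqrt (by positivity), EuclideanSpace.real_norm_sq_eq, Fin.sum_univ_three]
      rfl
    exact_mod_cast this
  have hsc : ((SS ε x y : ℝ) : ℂ) ≠ 0 := by exact_mod_cast (SS_pos hε x y).ne'
  have hpi : (Real.pi : ℂ) ≠ 0 := by exact_mod_cast Real.pi_ne_zero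
  have hi : ∀ i : Fin 3, inner ℝ (y - x) (EuclideanSpace.single i (1 : ℝ)) = y i - x i := by
    intro i
    simp [EuclideanSpace.inner_single_right]
  simp only [hi, PiLp.norm_single]
  set s := SS ε x y
  have key : 4 * ((s : ℂ) ^ 2 - ε ^ 2) * hl ζ s + 6 * hk ζ s = - ζ ^ 2 * hh ζ s - 4 * ε ^ 2 * hl ζ s := by
    unfold hl hk hh
    push_cast
    field_simp
    ring_nf
  rw [← key, hn]
  simp
  ring
lemma norm_expo (ζ : ℂ) (s : ℝ) :
    ‖Complex.exp (Complex.I * ζ * (s : ℝ))‖ = Real.exp (-(ζ.im * s)) := by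
  rw [Complex.norm_exp]
  simp

lemma norm_hh_le (ζ : ℂ) (hζ : 0 < ζ.im) {r s : ℝ} (hr : 0 < r) (hrs : r ≤ s) :
    ‖hh ζ s‖ ≤ Real.exp (-(ζ.im * r)) * r⁻¹ := by
  unfold hh
  have hs : 0 < s := hr.trans_le hrs
  rw [norm_div, norm_expo, Complex.norm_real, Real.norm_of_nonneg (by positivity), div_eq_mul_inv]
  have : r ≤ 4 * Real.pi * s := by nlinarith [Real.pi_gt_three]
  gcongr

lemma integrable_yuk (η : ℝ) (hη : 0 < η) (x : EuclideanSpace ℝ (Fin 3)) :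
    Integrable (fun y : EuclideanSpace ℝ (Fin 3) => Real.exp (-(η * ‖y - x‖)) * ‖y - x‖⁻¹) := by
  have h : Integrable (fun y : EuclideanSpace ℝ (Fin 3) =>
      (fun r : ℝ => Real.exp (-(η * r)) * r⁻¹) ‖y‖) := by
    refine (integrable_fun_norm_addHaar volume (f := fun r : ℝ => Real.exp (-(η * r)) * r⁻¹)).2 ?_
    have := integrableOn_rpow_mul_exp_neg_mul_rpow (p := 1) (s := 1) (b := η) (by norm_num)
      (by norm_num) hη
    refine this.congr_fun (fun r hr => ?_) measurableSet_Ioi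
    have hr' : r ≠ 0 := (mem_Ioi.1 hr).ne'
    simp
    field_simp
  exact h.comp_sub_right x

lemma le_SS (ε : ℝ) (x y) : ‖y - x‖ ≤ SS ε x y := by
  unfold SS
  apply Real.le_sqrt_of_sq_le
  nlinarith [sq_nonneg ε]

lemma hh_contAt (ζ : ℂ) {s : ℝ} (hs : 0 < s) : ContinuousAt (hh ζ) s :=
  (hh_deriv ζ s hs).continuousAt

lemma limD (ζ : ℂ) (hζ : 0 < ζ.im) (ψ : EuclideanSpace ℝ (Fin 3) → ℂ) (hψ : Continuous ψ)
    (hs : HasCompactSupport ψ) (x : EuclideanSpace ℝ (Fin 3)) :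
    Tendsto (fun ε : ℝ => ∫ y, hh ζ (SS ε x y) * ψ y) (𝓝[>] 0) (𝓝 (∫ y, hh ζ ‖x - y‖ * ψ y)) := by
  obtain ⟨C, hC⟩ := hs.exists_bound_of_continuous hψ
  have hne : ∀ᵐ y : EuclideanSpace ℝ (Fin 3), y ≠ x := by
    simp [ae_iff]
  refine tendsto_integral_filter_of_dominated_convergence
    (fun y => (Real.exp (-(ζ.im * ‖y - x‖)) * ‖y - x‖⁻¹) * C) ?_ ?_ ?_ ?_
  · filter_upwards [self_mem_nhdsWithin] with ε hε
    exact ((hh_contDiff ζ hε x).continuous.mul hψ).aestronglyMeasurable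
  · filter_upwards [self_mem_nhdsWithin] with ε hε
    filter_upwards [hne] with y hy
    rw [norm_mul]
    have : 0 < ‖y - x‖ := norm_pos_iff.2 (sub_ne_zero.2 hy)
    exact mul_le_mul (norm_hh_le ζ hζ this (le_SS ε x y)) (hC y) (norm_nonneg _) (by positivity)
  · exact (integrable_yuk _ hζ x).mul_const C
  · filter_upwards [hne] with y hy
    have hp : 0 < ‖y - x‖ := norm_pos_iff.2 (sub_ne_zero.2 hy)
    rw [norm_sub_rev x y]
    refine Tendsto.mul_const _ ((hh_contAt ζ hp).tendsto.comp ?_)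
    have : Continuous (fun ε => SS ε x y) := by unfold SS; fun_prop
    have h0 : SS 0 x y = ‖y - x‖ := by simp [SS]
    rw [← h0]
    exact (this.tendsto 0).mono_left nhdsWithin_le_nhds

noncomputable def JJ (r : ℝ) : ℝ := √(r ^ 2 + 1)

lemma JJ_pos (r : ℝ) : 0 < JJ r := by unfold JJ; positivity
lemma JJ_sq (r : ℝ) : JJ r ^ 2 = r ^ 2 + 1 := by unfold JJ; exact Real.sq_sqrt (by positivity)
lemma JJ_cont : Continuous JJ := by unfold JJ; fun_prop

lemma JJ_deriv (r : ℝ) : HasDerivAt JJ (r / JJ r) r := by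
  have h : HasDerivAt (fun r : ℝ => r ^ 2 + 1) (2 * r) r := by
    simpa using (hasDerivAt_pow 2 r).add_const 1
  refine (h.sqrt (by positivity)).congr_deriv ?_
  have := (JJ_pos r).ne'
  unfold JJ at *
  field_simp

lemma JJ_lim : Tendsto (fun r => r / JJ r) atTop (𝓝 1) := by
  have h1 : Tendsto (fun r : ℝ => r ^ 2 + 1) atTop atTop :=
    tendsto_atTop_add_const_right _ _ (tendsto_pow_atTop (by norm_num))
  have h2 : Tendsto (fun r : ℝ => √(1 - (r ^ 2 + 1)⁻¹)) atTop (𝓝 √(1 - 0)) :=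
    (tendsto_const_nhds.sub (tendsto_inv_atTop_zero.comp h1)).sqrt
  simp only [sub_zero, Real.sqrt_one] at h2
  refine h2.congr' ?_
  filter_upwards [eventually_gt_atTop 0] with r hr
  have : (1 - (r ^ 2 + 1)⁻¹) = r ^ 2 / (r ^ 2 + 1) := by
    field_simp
    ring
  rw [this, Real.sqrt_div (by positivity), Real.sqrt_sq hr.le]
  rfl

lemma JJ_int : ∫ r in Ioi (0 : ℝ), 3 * r ^ 2 / JJ r ^ 5 = 1 := by
  have := integral_Ioi_of_hasDerivAt_of_nonneg' (a := 0) (g := fun r => (r / JJ r) ^ 3)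
    (g' := fun r => 3 * r ^ 2 / JJ r ^ 5) (l := 1) ?_ ?_ ?_
  · simpa using this
  · intro r _
    have h := (((hasDerivAt_id r).div (JJ_deriv r) (JJ_pos r).ne')).pow 3
    refine h.congr_deriv ?_
    have h1 := (JJ_pos r).ne'
    simp
    field_simp
    rw [JJ_sq]
    ring
  · intro r _
    have := JJ_pos r
    positivity
  · simpa using JJ_lim.pow 3

lemma integrable_JJ : Integrable (fun z : EuclideanSpace ℝ (Fin 3) => (JJ ‖z‖ ^ 5)⁻¹) := by
  have := integrable_rpow_neg_one_add_norm_sq (E := EuclideanSpace ℝ (Fin 3)) (μ := volume) (r := 5)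
    (by simp; norm_num)
  refine this.congr (Eventually.of_forall fun z => ?_)
  simp only [JJ]
  rw [Real.sqrt_eq_rpow, ← Real.rpow_natCast _ 5, ← Real.rpow_mul (by positivity),
    ← Real.rpow_neg (by positivity), add_comm]
  norm_num

lemma int_JJ3 : ∫ z : EuclideanSpace ℝ (Fin 3), 3 / (4 * Real.pi * JJ ‖z‖ ^ 5) = 1 := by
  rw [integral_fun_norm_addHaar volume (fun r => 3 / (4 * Real.pi * JJ r ^ 5))]
  have hv : (volume : Measure (EuclideanSpace ℝ (Fin 3))).real (Metric.ball 0 1) = 4 * Real.pi / 3 := by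
    rw [Measure.real, EuclideanSpace.volume_ball_fin_three]
    simp
    rw [ENNReal.toReal_ofReal (by positivity)]
    ring
  rw [hv]
  have e : ∀ r : ℝ, r ^ (Module.finrank ℝ (EuclideanSpace ℝ (Fin 3)) - 1) •
      (3 / (4 * Real.pi * JJ r ^ 5)) = (4 * Real.pi)⁻¹ * (3 * r ^ 2 / JJ r ^ 5) := by
    intro r
    have h1 := (JJ_pos r).ne'
    simp
    field_simp
  simp only [e]
  rw [integral_const_mul, JJ_int]
  simp
  field_simp

lemma ubound (ζ : ℂ) (hζ : 0 < ζ.im) : ∃ C : ℝ, ∀ t : ℝ, 0 ≤ t →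
    ‖Complex.exp (Complex.I * ζ * (t : ℝ)) * (3 - 3 * Complex.I * ζ * t - ζ ^ 2 * t ^ 2)‖ ≤ C := by
  refine ⟨3 + 3 * ‖ζ‖ * (1 / ζ.im) + ‖ζ‖ ^ 2 * (2 / ζ.im ^ 2), fun t ht => ?_⟩
  rw [norm_mul, norm_expo]
  have h1 : ‖(3 - 3 * Complex.I * ζ * t - ζ ^ 2 * t ^ 2 : ℂ)‖ ≤ 3 + 3 * ‖ζ‖ * t + ‖ζ‖ ^ 2 * t ^ 2 := by
    refine (norm_sub_le _ _).trans (add_le_add ((norm_sub_le _ _).trans (add_le_add ?_ ?_)) ?_)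
    · simp
    · simp [abs_of_nonneg ht]
    · simp
  have hu : 0 ≤ ζ.im * t := by positivity
  have e0 : Real.exp (-(ζ.im * t)) ≤ 1 := by simpa using hu
  have epos := Real.exp_pos (-(ζ.im * t))
  have ee : Real.exp (-(ζ.im * t)) * Real.exp (ζ.im * t) = 1 := by rw [← Real.exp_add]; simp
  have e1 : Real.exp (-(ζ.im * t)) * t ≤ 1 / ζ.im := by
    have := Real.pow_div_factorial_le_exp _ hu 1
    rw [le_div_iff₀ hζ, ← ee, mul_assoc]
    refine mul_le_mul_of_nonneg_left ?_ epos.le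
    simpa [mul_comm] using this
  have e2 : Real.exp (-(ζ.im * t)) * t ^ 2 ≤ 2 / ζ.im ^ 2 := by
    have := Real.pow_div_factorial_le_exp _ hu 2
    rw [le_div_iff₀ (by positivity), mul_assoc]
    have h2 : t ^ 2 * ζ.im ^ 2 ≤ 2 * Real.exp (ζ.im * t) := by
      norm_num [Nat.factorial] at this
      nlinarith
    calc _ ≤ Real.exp (-(ζ.im * t)) * (2 * Real.exp (ζ.im * t)) :=
          mul_le_mul_of_nonneg_left h2 epos.le
      _ = 2 := by linear_combination 2 * ee
  calc _ ≤ Real.exp (-(ζ.im * t)) * (3 + 3 * ‖ζ‖ * t + ‖ζ‖ ^ 2 * t ^ 2) :=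
        mul_le_mul_of_nonneg_left h1 epos.le
    _ = 3 * Real.exp (-(ζ.im * t)) + 3 * ‖ζ‖ * (Real.exp (-(ζ.im * t)) * t)
        + ‖ζ‖ ^ 2 * (Real.exp (-(ζ.im * t)) * t ^ 2) := by ring
    _ ≤ 3 * 1 + 3 * ‖ζ‖ * (1 / ζ.im) + ‖ζ‖ ^ 2 * (2 / ζ.im ^ 2) := by gcongr
    _ = _ := by ring

noncomputable def uu (ζ : ℂ) (t : ℝ) : ℂ :=
  Complex.exp (Complex.I * ζ * (t : ℝ)) * (3 - 3 * Complex.I * ζ * t - ζ ^ 2 * t ^ 2)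

lemma uu_cont (ζ : ℂ) : Continuous (uu ζ) := by unfold uu; fun_prop

lemma scaleC (ζ : ℂ) (φ : EuclideanSpace ℝ (Fin 3) → ℂ)
    (x : EuclideanSpace ℝ (Fin 3)) {ε : ℝ} (hε : 0 < ε) :
    ∫ y, 4 * (ε : ℂ) ^ 2 * hl ζ (SS ε x y) * φ y =
      ∫ z, (uu ζ (ε * JJ ‖z‖) * φ (x + ε • z)) * (((4 * Real.pi * JJ ‖z‖ ^ 5)⁻¹ : ℝ) : ℂ) := by
  rw [← integral_add_left_eq_self _ x]
  have h := Measure.integral_comp_smul (volume : Measure (EuclideanSpace ℝ (Fin 3)))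
    (fun y => 4 * (ε : ℂ) ^ 2 * hl ζ (SS ε x (x + y)) * φ (x + y)) ε
  have h' : ∫ y, 4 * (ε : ℂ) ^ 2 * hl ζ (SS ε x (x + y)) * φ (x + y) =
      ((ε : ℂ) ^ 3) * ∫ z, 4 * (ε : ℂ) ^ 2 * hl ζ (SS ε x (x + ε • z)) * φ (x + ε • z) := by
    have hc : (ε : ℂ) ≠ 0 := by exact_mod_cast hε.ne'
    rw [h, abs_of_pos (by positivity)]
    simp
    field_simp
  rw [h', ← integral_const_mul]
  congr 1
  funext z
  have hS : SS ε x (x + ε • z) = ε * JJ ‖z‖ := by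
    unfold SS JJ
    rw [add_sub_cancel_left, norm_smul, Real.norm_of_nonneg hε.le,
      show (ε * ‖z‖) ^ 2 + ε ^ 2 = ε ^ 2 * (‖z‖ ^ 2 + 1) by ring, Real.sqrt_mul (by positivity),
      Real.sqrt_sq hε.le]
  rw [hS]
  have hc : (ε : ℂ) ≠ 0 := by exact_mod_cast hε.ne'
  have hJ : ((JJ ‖z‖ : ℝ) : ℂ) ≠ 0 := by exact_mod_cast (JJ_pos _).ne'
  have hpi : (Real.pi : ℂ) ≠ 0 := by exact_mod_cast Real.pi_ne_zero
  unfold hl uu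
  push_cast
  field_simp
  ring

lemma limC (ζ : ℂ) (hζ : 0 < ζ.im) (φ : EuclideanSpace ℝ (Fin 3) → ℂ) (hφ : Continuous φ)
    (hs : HasCompactSupport φ) (x : EuclideanSpace ℝ (Fin 3)) :
    Tendsto (fun ε : ℝ => ∫ y, 4 * (ε : ℂ) ^ 2 * hl ζ (SS ε x y) * φ y) (𝓝[>] 0) (𝓝 (φ x)) := by
  obtain ⟨M, hM⟩ := hs.exists_bound_of_continuous hφ
  obtain ⟨C, hC⟩ := ubound ζ hζ
  have hC0 : 0 ≤ C := (norm_nonneg _).trans (hC 0 le_rfl)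
  have hlim : φ x = ∫ z : EuclideanSpace ℝ (Fin 3),
      (3 * φ x) * (((4 * Real.pi * JJ ‖z‖ ^ 5)⁻¹ : ℝ) : ℂ) := by
    rw [integral_const_mul, integral_complex_ofReal]
    have := int_JJ3
    simp only [div_eq_mul_inv] at this
    rw [integral_const_mul] at this
    have h2 : (3 : ℂ) * ((∫ z : EuclideanSpace ℝ (Fin 3), (4 * Real.pi * JJ ‖z‖ ^ 5)⁻¹ : ℝ) : ℂ) = 1 := by
      exact_mod_cast this
    linear_combination (-φ x) * h2
  have hJc : Continuous (fun z : EuclideanSpace ℝ (Fin 3) => JJ ‖z‖) := JJ_cont.comp continuous_norm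
  have key : Tendsto (fun ε : ℝ => ∫ z, (uu ζ (ε * JJ ‖z‖) * φ (x + ε • z)) *
      (((4 * Real.pi * JJ ‖z‖ ^ 5)⁻¹ : ℝ) : ℂ)) (𝓝[>] 0) (𝓝 (φ x)) := by
    rw [show 𝓝 (φ x) = 𝓝 _ from congrArg 𝓝 hlim]
    refine tendsto_integral_filter_of_dominated_convergence
      (fun z => (C * M) * ((4 * Real.pi)⁻¹ * (JJ ‖z‖ ^ 5)⁻¹)) ?_ ?_ ?_ ?_
    · refine Eventually.of_forall fun ε => Continuous.aestronglyMeasurable ?_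
      refine Continuous.mul (((uu_cont ζ).comp (continuous_const.mul hJc)).mul
        (hφ.comp (by fun_prop))) (Complex.continuous_ofReal.comp ?_)
      refine Continuous.inv₀ (continuous_const.mul (hJc.pow 5)) fun z => ?_
      have := JJ_pos ‖z‖
      positivity
    · filter_upwards [self_mem_nhdsWithin] with ε hε
      refine Eventually.of_forall fun z => ?_
      have hJ := JJ_pos ‖z‖
      have hε' : 0 < ε := hε
      rw [norm_mul, norm_mul, Complex.norm_real, Real.norm_of_nonneg (by positivity), mul_inv]
      refine mul_le_mul_of_nonneg_right ?_ (by positivity)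
      exact mul_le_mul (hC _ (by positivity)) (hM _) (norm_nonneg _) hC0
    · exact (integrable_JJ.const_mul _).const_mul _
    · refine Eventually.of_forall fun z => Tendsto.mul_const _ ?_
      have hc : Continuous (fun ε : ℝ => uu ζ (ε * JJ ‖z‖) * φ (x + ε • z)) :=
        ((uu_cont ζ).comp (by fun_prop)).mul (hφ.comp (by fun_prop))
      have h0 := (hc.tendsto 0).mono_left (nhdsWithin_le_nhds (s := Ioi 0))
      simpa [uu] using h0
  refine key.congr' ?_
  filter_upwards [self_mem_nhdsWithin] with ε hε
  exact (scaleC ζ φ x hε).symm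

/-- For a smooth compactly supported `φ : ℝ³ → ℂ` and `ζ ∈ ℂ` with
`Im ζ > 0`, for every `x`,
`φ(x) = ∫ (e^{iζ|x-y|}/(4π|x-y|)) (-Δφ(y) - ζ² φ(y)) dy`. -/
theorem stmt10 (φ : EuclideanSpace ℝ (Fin 3) → ℂ) (hφ : ContDiff ℝ (⊤ : ℕ∞) φ)
    (hsupp : HasCompactSupport φ) (ζ : ℂ) (hζ : 0 < ζ.im) :
    ∀ x : EuclideanSpace ℝ (Fin 3),
      φ x = ∫ y : EuclideanSpace ℝ (Fin 3),
        (Complex.exp (Complex.I * ζ * (‖x - y‖ : ℝ)) / ((4 * Real.pi * ‖x - y‖ : ℝ) : ℂ)) *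
          (-laplacian3 φ y - ζ ^ 2 * φ y) := by
  intro x
  have hφ2 : ContDiff ℝ 2 φ := hφ.of_le (WithTop.coe_le_coe.2 (le_top : (2 : ℕ∞) ≤ ⊤))
  have hψc : Continuous (fun y => -laplacian3 φ y - ζ ^ 2 * φ y) :=
    (continuous_lap φ hφ2).neg.sub (continuous_const.mul hφ2.continuous)
  have hψs : HasCompactSupport (fun y => -laplacian3 φ y - ζ ^ 2 * φ y) := by
    have h1 : HasCompactSupport (fun y => -laplacian3 φ y) := (hcs_lap φ hsupp).neg
    have h2 : HasCompactSupport (fun y => ζ ^ 2 * φ y) := hsupp.mul_left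
    exact h1.sub h2
  have hD := limD ζ hζ _ hψc hψs x
  have hC := limC ζ hζ φ hφ2.continuous hsupp x
  refine tendsto_nhds_unique hC (hD.congr' ?_)
  filter_upwards [self_mem_nhdsWithin] with ε hε
  have hG := hh_contDiff ζ hε x
  have i1 : Integrable (fun y => hh ζ (SS ε x y) * laplacian3 φ y) :=
    (hG.continuous.mul (continuous_lap φ hφ2)).integrable_of_hasCompactSupport
      (hcs_lap φ hsupp).mul_left
  have i2 : Integrable (fun y => hh ζ (SS ε x y) * φ y) :=
    (hG.continuous.mul hφ2.continuous).integrable_of_hasCompactSupport hsupp.mul_left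
  have i3 : Integrable (fun y => laplacian3 (fun y => hh ζ (SS ε x y)) y * φ y) :=
    ((continuous_lap _ hG).mul hφ2.continuous).integrable_of_hasCompactSupport hsupp.mul_left
  have e1 : ∀ y, hh ζ (SS ε x y) * (-laplacian3 φ y - ζ ^ 2 * φ y) =
      -(hh ζ (SS ε x y) * laplacian3 φ y) - ζ ^ 2 * (hh ζ (SS ε x y) * φ y) := fun y => by ring
  have e2 : ∀ y, 4 * (ε : ℂ) ^ 2 * hl ζ (SS ε x y) * φ y =
      -(laplacian3 (fun y => hh ζ (SS ε x y)) y * φ y) - ζ ^ 2 * (hh ζ (SS ε x y) * φ y) := fun y => by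
    rw [lap_hh ζ hε]; ring
  simp only [e1, e2]
  rw [integral_sub i1.fun_neg (i2.const_mul _), integral_sub i3.fun_neg (i2.const_mul _), integral_neg,
    integral_neg, ibp_lap _ φ hG hφ2 hsupp]
end
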